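/- Consider a pairwise separable convex program whose objective F is (λ,w)-scaled diagonally dominant, with the perturbed min-sum algorithm and initial messages satisfying the initialization assumption. Then for every p ∈ ℝ^{E⃗}, every r ∈ V, every (u,v) ∈ E⃗, and every t ≥ 0, the map p ↦ x^{(t)}_r(p) is differentiable and | ∂x^{(t)}_r(p)/∂p_{u→v} | ≤ K · λ^t/(1−λ). -/

import Mathlib

open Filter Finset

/-- Partial derivative of `F : (ι → ℝ) → ℝ` in coordinate `i` at `x`. -/
noncomputable def pd {ι : Type*} [DecidableEq ι] (F : (ι → ℝ) → ℝ) (i : ι) (x : ι → ℝ) : ℝ :=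
  deriv (fun y => F (Function.update x i y)) (x i)

/-- Second partial derivative `∂²F/∂x_i∂x_j` of `F : (ι → ℝ) → ℝ` at `x`. -/
noncomputable def pd2 {ι : Type*} [DecidableEq ι] (F : (ι → ℝ) → ℝ) (i j : ι) (x : ι → ℝ) : ℝ :=
  pd (pd F j) i x

/-- The directed edges `E⃗` of a simple graph. -/
abbrev EdgeDir {V : Type*} (G : SimpleGraph V) : Type _ := {e : V × V // G.Adj e.1 e.2}

/-!
Send a message `J` along an edge with factor `φ z x`, from a sender in state `z` to a recipient in
state `x`, and write `κ = ∂²φ/∂z∂x`. The following invariant survives every min-sum update: for some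
`z`, depending on the point, `∂²J/∂x²` falls short of `∂²φ/∂x²` by at most the multiple of `|κ|`
that diagonal dominance charges to the edge, and the derivative of `∂J/∂x` in the direction of the
perturbation is at most `c` times the part of this charge that is left over after scaling the
shortfall by `lam`. Indeed a partial minimum has the second derivatives of a Schur complement: if
`h` is the curvature of the minimized objective, then the shortfall of the new message is `κ² / h`,
and its mixed derivative is `-κ / h` times the sum of those of the incoming messages. Summing the
invariant over the incoming edges, the charges add up to at most `lam` times the curvature of the
node, so that each update replaces `c` by `lam * c`. Initially the perturbation enters through the
source term of a single edge, and the first update gives `c` proportional to `1 / (1 - lam)`. The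
implicit function theorem turns the invariant into the bound on the minimizer.
-/

section Families

variable {E E' : Type*} [NormedAddCommGroup E] [NormedSpace ℝ E]
  [NormedAddCommGroup E'] [NormedSpace ℝ E'] {J J' : E → ℝ → ℝ}

/-- The derivative `∂J/∂x` of a family `J p x` of functions of `x`, as a function of the pair
`(p, x)`. Messages are families over the perturbations `p`, while an edge factor `f_{ij}(x_i, x_j)`
is a family of functions of `x_j` parametrized by `x_i`. -/
noncomputable def derivSnd (J : E → ℝ → ℝ) (q : E × ℝ) : ℝ :=
  deriv (J q.1) q.2

/-- The second derivative `∂²J/∂x²` of a family `J p x`, see `curvature_eq_deriv_deriv`. -/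
noncomputable def curvature (J : E → ℝ → ℝ) (p : E) (x : ℝ) : ℝ :=
  fderiv ℝ (derivSnd J) (p, x) (0, 1)

/-- The mixed derivative `∂²J/∂v∂x` of a family `J p x`, in the direction `v` of the parameter. -/
noncomputable def crossDeriv (J : E → ℝ → ℝ) (v p : E) (x : ℝ) : ℝ :=
  fderiv ℝ (derivSnd J) (p, x) (v, 0)

/-- The regularity of messages preserved by the min-sum update: `∂J/∂x` exists and is `C¹` jointly
in the parameter and in `x`. -/
structure HasC1DerivSnd (J : E → ℝ → ℝ) : Prop where
  differentiable : ∀ p, Differentiable ℝ (J p)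
  contDiff : ContDiff ℝ 1 (derivSnd J)

theorem HasC1DerivSnd.hasDerivAt (hJ : HasC1DerivSnd J) (p : E) (x : ℝ) :
    HasDerivAt (J p) (derivSnd J (p, x)) x :=
  (hJ.differentiable p x).hasDerivAt

theorem HasC1DerivSnd.hasFDerivAt (hJ : HasC1DerivSnd J) (q : E × ℝ) :
    HasFDerivAt (derivSnd J) (fderiv ℝ (derivSnd J) q) q :=
  (hJ.contDiff.differentiable one_ne_zero q).hasFDerivAt

theorem fderiv_derivSnd_apply (J : E → ℝ → ℝ) (p v : E) (x r : ℝ) :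
    fderiv ℝ (derivSnd J) (p, x) (v, r) = crossDeriv J v p x + r * curvature J p x := by
  have hsplit : (v, r) = (v, 0) + r • ((0 : E), (1 : ℝ)) := by simp
  rw [hsplit, map_add, map_smul, smul_eq_mul, crossDeriv, curvature]

@[simp]
theorem crossDeriv_zero_dir (J : E → ℝ → ℝ) (p : E) (x : ℝ) : crossDeriv J 0 p x = 0 :=
  map_zero (fderiv ℝ (derivSnd J) (p, x))

theorem crossDeriv_smul_dir (J : E → ℝ → ℝ) (r : ℝ) (v p : E) (x : ℝ) :
    crossDeriv J (r • v) p x = r * crossDeriv J v p x := by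
  have hsmul : (r • v, (0 : ℝ)) = r • (v, (0 : ℝ)) := by simp
  rw [crossDeriv, hsmul, map_smul, smul_eq_mul, crossDeriv]

theorem curvature_eq_deriv_deriv (hJ : HasC1DerivSnd J) (p : E) (x : ℝ) :
    curvature J p x = deriv (deriv (J p)) x :=
  ((hJ.hasFDerivAt (p, x)).comp_hasDerivAt x
    ((hasDerivAt_const x p).prodMk (hasDerivAt_id x))).deriv.symm

theorem derivSnd_add (hJ : HasC1DerivSnd J) (hJ' : HasC1DerivSnd J') :
    derivSnd (fun p x => J p x + J' p x) = derivSnd J + derivSnd J' :=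
  funext fun q => deriv_fun_add (hJ.differentiable q.1 q.2) (hJ'.differentiable q.1 q.2)

theorem HasC1DerivSnd.add (hJ : HasC1DerivSnd J) (hJ' : HasC1DerivSnd J') :
    HasC1DerivSnd fun p x => J p x + J' p x where
  differentiable p := (hJ.differentiable p).add (hJ'.differentiable p)
  contDiff := derivSnd_add hJ hJ' ▸ hJ.contDiff.add hJ'.contDiff

theorem fderiv_derivSnd_add (hJ : HasC1DerivSnd J) (hJ' : HasC1DerivSnd J') (q : E × ℝ) :
    fderiv ℝ (derivSnd fun p x => J p x + J' p x) q =
      fderiv ℝ (derivSnd J) q + fderiv ℝ (derivSnd J') q := by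
  rw [derivSnd_add hJ hJ']
  exact ((hJ.hasFDerivAt q).add (hJ'.hasFDerivAt q)).fderiv

theorem HasC1DerivSnd.comp_clm (hJ : HasC1DerivSnd J) (L : E' →L[ℝ] E) :
    HasC1DerivSnd fun a => J (L a) where
  differentiable a := hJ.differentiable (L a)
  contDiff := hJ.contDiff.comp (L.contDiff.comp contDiff_fst |>.prodMk contDiff_snd)

theorem fderiv_derivSnd_comp_clm (hJ : HasC1DerivSnd J) (L : E' →L[ℝ] E) (a v : E') (x r : ℝ) :
    fderiv ℝ (derivSnd fun a => J (L a)) (a, x) (v, r) =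
      fderiv ℝ (derivSnd J) (L a, x) (L v, r) := by
  have hcomp := (hJ.hasFDerivAt (L a, x)).comp (a, x)
    (L.prodMap (ContinuousLinearMap.id ℝ ℝ)).hasFDerivAt
  exact DFunLike.congr_fun hcomp.fderiv (v, r)

end Families

section LocalObjective

theorem contDiff_one_deriv {F : Type*} [NormedAddCommGroup F] [NormedSpace ℝ F] {f : ℝ → F}
    (hf : ContDiff ℝ 2 f) : ContDiff ℝ 1 (deriv f) :=
  (contDiff_succ_iff_deriv (n := 1).1 (by simpa [one_add_one_eq_two] using hf)).2.2

variable {ι E : Type*} [NormedAddCommGroup E] [NormedSpace ℝ E]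
  {f : ℝ → ℝ} {T : Finset ι} {J : ι → E → ℝ → ℝ}

/-- The objective seen by a node with factor `f` receiving the messages `J u`, `u ∈ T`. -/
def localObjective (f : ℝ → ℝ) (T : Finset ι) (J : ι → E → ℝ → ℝ) (p : E) (y : ℝ) : ℝ :=
  f y + ∑ u ∈ T, J u p y

theorem derivSnd_localObjective (hf : Differentiable ℝ f) (hJ : ∀ u ∈ T, HasC1DerivSnd (J u)) :
    derivSnd (localObjective f T J) = fun q => deriv f q.2 + ∑ u ∈ T, derivSnd (J u) q :=
  funext fun q => ((hf q.2).hasDerivAt.add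
    (HasDerivAt.fun_sum fun u hu => (hJ u hu).hasDerivAt q.1 q.2)).deriv

theorem hasC1DerivSnd_localObjective (hf : ContDiff ℝ 2 f) (hJ : ∀ u ∈ T, HasC1DerivSnd (J u)) :
    HasC1DerivSnd (localObjective f T J) where
  differentiable p := (hf.differentiable two_ne_zero).add
    (Differentiable.fun_sum fun u hu => (hJ u hu).differentiable p)
  contDiff := by
    rw [derivSnd_localObjective (hf.differentiable two_ne_zero) hJ]
    exact ((contDiff_one_deriv hf).comp contDiff_snd).add
      (ContDiff.sum fun u hu => (hJ u hu).contDiff)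

theorem fderiv_derivSnd_localObjective (hf : ContDiff ℝ 2 f) (hJ : ∀ u ∈ T, HasC1DerivSnd (J u))
    (q v : E × ℝ) :
    fderiv ℝ (derivSnd (localObjective f T J)) q v =
      v.2 * deriv (deriv f) q.2 + ∑ u ∈ T, fderiv ℝ (derivSnd (J u)) q v := by
  have hf' : HasFDerivAt (fun q : E × ℝ => deriv f q.2) _ q :=
    ((contDiff_one_deriv hf).differentiable one_ne_zero q.2).hasFDerivAt.comp q hasFDerivAt_snd
  rw [derivSnd_localObjective (hf.differentiable two_ne_zero) hJ,
    (hf'.fun_add (HasFDerivAt.fun_sum fun u hu => (hJ u hu).hasFDerivAt q)).fderiv]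
  simp

theorem curvature_localObjective (hf : ContDiff ℝ 2 f) (hJ : ∀ u ∈ T, HasC1DerivSnd (J u))
    (p : E) (y : ℝ) :
    curvature (localObjective f T J) p y = deriv (deriv f) y + ∑ u ∈ T, curvature (J u) p y := by
  rw [curvature, fderiv_derivSnd_localObjective hf hJ, one_mul]
  rfl

theorem crossDeriv_localObjective (hf : ContDiff ℝ 2 f) (hJ : ∀ u ∈ T, HasC1DerivSnd (J u))
    (v p : E) (y : ℝ) :
    crossDeriv (localObjective f T J) v p y = ∑ u ∈ T, crossDeriv (J u) v p y := by
  rw [crossDeriv, fderiv_derivSnd_localObjective hf hJ, zero_mul, zero_add]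
  rfl

end LocalObjective

section EdgeFactors

variable {E F : Type*} [NormedAddCommGroup E] [NormedSpace ℝ E] [NormedAddCommGroup F]
  [NormedSpace ℝ F] {Φ : E → F} {φ : ℝ → ℝ → ℝ}

theorem contDiff_one_fderiv_apply (hΦ : ContDiff ℝ 2 Φ) (v : E) :
    ContDiff ℝ 1 fun q => fderiv ℝ Φ q v :=
  (hΦ.fderiv_right (m := 1) (by norm_num)).clm_apply contDiff_const

theorem fderiv_fderiv_apply_comm (hΦ : ContDiff ℝ 2 Φ) (q u v : E) :
    fderiv ℝ (fun q => fderiv ℝ Φ q v) q u = fderiv ℝ (fun q => fderiv ℝ Φ q u) q v := by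
  have hΦ' : DifferentiableAt ℝ (fderiv ℝ Φ) q :=
    (hΦ.fderiv_right (m := 1) (by norm_num)).differentiable one_ne_zero q
  have hsymm : IsSymmSndFDerivAt ℝ Φ q := hΦ.contDiffAt.isSymmSndFDerivAt (by simp)
  rw [fderiv_clm_apply hΦ' (differentiableAt_const v),
    fderiv_clm_apply hΦ' (differentiableAt_const u)]
  simpa using hsymm.eq u v

theorem derivSnd_eq_fderiv (hφ : Differentiable ℝ fun q : ℝ × ℝ => φ q.1 q.2) :
    derivSnd φ = fun q => fderiv ℝ (fun q : ℝ × ℝ => φ q.1 q.2) q (0, 1) :=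
  funext fun q => ((hφ q).hasFDerivAt.comp_hasDerivAt (f := fun y => (q.1, y)) q.2
    ((hasDerivAt_const q.2 q.1).prodMk (hasDerivAt_id q.2))).deriv

theorem derivSnd_flip_eq_fderiv (hφ : Differentiable ℝ fun q : ℝ × ℝ => φ q.1 q.2) :
    derivSnd (flip φ) =
      fun q => fderiv ℝ (fun q : ℝ × ℝ => φ q.1 q.2) (q.2, q.1) (1, 0) :=
  funext fun q => ((hφ (q.2, q.1)).hasFDerivAt.comp_hasDerivAt (f := fun y => (y, q.1)) q.2
    ((hasDerivAt_id q.2).prodMk (hasDerivAt_const q.2 q.1))).deriv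

theorem hasC1DerivSnd_of_contDiff (hφ : ContDiff ℝ 2 fun q : ℝ × ℝ => φ q.1 q.2) :
    HasC1DerivSnd φ where
  differentiable a := (hφ.differentiable two_ne_zero).comp
    ((differentiable_const a).prodMk differentiable_id)
  contDiff := by
    rw [derivSnd_eq_fderiv (hφ.differentiable two_ne_zero)]
    exact contDiff_one_fderiv_apply hφ (0, 1)

theorem crossDeriv_flip (hφ : ContDiff ℝ 2 fun q : ℝ × ℝ => φ q.1 q.2) (a b : ℝ) :
    crossDeriv (flip φ) 1 b a = crossDeriv φ 1 a b := by
  have hdiff := hφ.differentiable two_ne_zero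
  have hcomp := ((contDiff_one_fderiv_apply hφ (1, 0)).differentiable one_ne_zero
    (a, b)).hasFDerivAt.comp (b, a)
    (ContinuousLinearEquiv.prodComm ℝ ℝ ℝ : ℝ × ℝ →L[ℝ] ℝ × ℝ).hasFDerivAt
  rw [crossDeriv, crossDeriv, derivSnd_eq_fderiv hdiff, derivSnd_flip_eq_fderiv hdiff,
    ← fderiv_fderiv_apply_comm hφ]
  exact DFunLike.congr_fun hcomp.fderiv (1, 0)

end EdgeFactors

section Argmin

variable {E : Type*} {b : E → ℝ → ℝ} {X : E → ℝ}

theorem derivSnd_argmin_eq_zero (hX : ∀ a y, b a (X a) ≤ b a y) (a : E) :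
    derivSnd b (a, X a) = 0 :=
  IsLocalMin.deriv_eq_zero (Eventually.of_forall (hX a))

variable [NormedAddCommGroup E] [NormedSpace ℝ E]

theorem strictMono_deriv_of_curvature_pos (hb : HasC1DerivSnd b)
    (hpos : ∀ a y, 0 < curvature b a y) (a : E) : StrictMono (deriv (b a)) :=
  strictMono_of_deriv_pos fun y => curvature_eq_deriv_deriv hb a y ▸ hpos a y

theorem contDiff_argmin [CompleteSpace E] (hb : HasC1DerivSnd b)
    (hpos : ∀ a y, 0 < curvature b a y) (hX : ∀ a y, b a (X a) ≤ b a y) : ContDiff ℝ 1 X := by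
  refine contDiff_iff_contDiffAt.2 fun a => ?_
  have hC1 : ContDiffAt ℝ 1 (derivSnd b) (a, X a) := hb.contDiff.contDiffAt
  have hinv : (fderiv ℝ (derivSnd b) (a, X a) ∘L .inr ℝ E ℝ).IsInvertible := by
    refine ⟨ContinuousLinearEquiv.unitsEquivAut ℝ (Units.mk0 _ (hpos a (X a)).ne'), ?_⟩
    ext
    simp [curvature]
  refine (hC1.contDiffAt_implicitFunction one_ne_zero hinv).congr_of_eventuallyEq ?_
  filter_upwards [hC1.eventually_apply_implicitFunction one_ne_zero hinv] with a' ha'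
  refine (strictMono_deriv_of_curvature_pos hb hpos a').injective ?_
  exact (derivSnd_argmin_eq_zero hX a').trans
    (ha'.trans (derivSnd_argmin_eq_zero hX a)).symm

theorem fderiv_argmin (hb : HasC1DerivSnd b) (hpos : ∀ a y, 0 < curvature b a y)
    (hX : ∀ a y, b a (X a) ≤ b a y) {a : E} (hXa : DifferentiableAt ℝ X a) (v : E) :
    fderiv ℝ X a v = -crossDeriv b v a (X a) / curvature b a (X a) := by
  have hcomp := (hb.hasFDerivAt (a, X a)).comp a ((hasFDerivAt_id a).prodMk hXa.hasFDerivAt)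
  have hzero : derivSnd b ∘ (fun a => (id a, X a)) = fun _ => 0 :=
    funext (derivSnd_argmin_eq_zero hX)
  rw [hzero] at hcomp
  have hv : fderiv ℝ (derivSnd b) (a, X a) (v, fderiv ℝ X a v) = 0 :=
    (DFunLike.congr_fun (hcomp.unique (hasFDerivAt_const 0 a)) v :)
  rw [fderiv_derivSnd_apply] at hv
  rw [eq_div_iff (hpos a (X a)).ne']
  linarith

/-- The envelope theorem: `φ` plays the role of the objective at a fixed minimizer. -/
theorem hasDerivAt_of_le_of_eq {J φ : ℝ → ℝ} {φ' x : ℝ} (hJ : DifferentiableAt ℝ J x)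
    (hφ : HasDerivAt φ φ' x) (hle : ∀ y, J y ≤ φ y) (heq : J x = φ x) : HasDerivAt J φ' x := by
  have hmin : IsLocalMin (fun y => φ y - J y) x :=
    Eventually.of_forall fun y => by simpa [heq] using hle y
  have hzero := hmin.hasDerivAt_eq_zero (hφ.sub hJ.hasDerivAt)
  exact hJ.hasDerivAt.congr_deriv (sub_eq_zero.1 hzero).symm

end Argmin

section PartialMinimization

variable {E : Type*} [NormedAddCommGroup E] [NormedSpace ℝ E]
  {R J : E → ℝ → ℝ} {φ : ℝ → ℝ → ℝ} {X : E × ℝ → ℝ}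

/-- The objective minimized over `y` in a message update: `φ y x` is the factor of the edge along
which the message is sent, and `R p y` collects all the other terms. -/
def coupledObjective (R : E → ℝ → ℝ) (φ : ℝ → ℝ → ℝ) (a : E × ℝ) (y : ℝ) : ℝ :=
  R a.1 y + φ y a.2

theorem contDiff_flip (hφ : ContDiff ℝ 2 fun q : ℝ × ℝ => φ q.1 q.2) :
    ContDiff ℝ 2 fun q : ℝ × ℝ => flip φ q.1 q.2 :=
  hφ.comp (contDiff_snd.prodMk contDiff_fst)

theorem hasC1DerivSnd_coupledObjective (hR : HasC1DerivSnd R)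
    (hφ : ContDiff ℝ 2 fun q : ℝ × ℝ => φ q.1 q.2) : HasC1DerivSnd (coupledObjective R φ) :=
  (hR.comp_clm (.fst ℝ E ℝ)).add
    ((hasC1DerivSnd_of_contDiff (contDiff_flip hφ)).comp_clm (.snd ℝ E ℝ))

theorem fderiv_derivSnd_coupledObjective (hR : HasC1DerivSnd R)
    (hφ : ContDiff ℝ 2 fun q : ℝ × ℝ => φ q.1 q.2) (a v : E × ℝ) (y r : ℝ) :
    fderiv ℝ (derivSnd (coupledObjective R φ)) (a, y) (v, r) =
      fderiv ℝ (derivSnd R) (a.1, y) (v.1, r) +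
        fderiv ℝ (derivSnd (flip φ)) (a.2, y) (v.2, r) := by
  have hφ' := hasC1DerivSnd_of_contDiff (contDiff_flip hφ)
  have hadd := fderiv_derivSnd_add (hR.comp_clm (.fst ℝ E ℝ)) (hφ'.comp_clm (.snd ℝ E ℝ)) (a, y)
  refine (DFunLike.congr_fun hadd (v, r)).trans ?_
  rw [_root_.add_apply, fderiv_derivSnd_comp_clm hR, fderiv_derivSnd_comp_clm hφ']
  rfl

theorem curvature_coupledObjective (hR : HasC1DerivSnd R)
    (hφ : ContDiff ℝ 2 fun q : ℝ × ℝ => φ q.1 q.2) (p : E) (x y : ℝ) :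
    curvature (coupledObjective R φ) (p, x) y = curvature R p y + curvature (flip φ) x y :=
  fderiv_derivSnd_coupledObjective hR hφ (p, x) 0 y 1

theorem crossDeriv_coupledObjective (hR : HasC1DerivSnd R)
    (hφ : ContDiff ℝ 2 fun q : ℝ × ℝ => φ q.1 q.2) (p v : E) (x r y : ℝ) :
    crossDeriv (coupledObjective R φ) (v, r) (p, x) y =
      crossDeriv R v p y + r * crossDeriv φ 1 y x := by
  rw [← crossDeriv_flip hφ, ← crossDeriv_smul_dir, smul_eq_mul, mul_one]
  exact fderiv_derivSnd_coupledObjective hR hφ (p, x) (v, r) y 0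

theorem hasDerivAt_partialMin (hR : HasC1DerivSnd R)
    (hφ : ContDiff ℝ 2 fun q : ℝ × ℝ => φ q.1 q.2) (hX : Differentiable ℝ X)
    (hJX : ∀ p x, coupledObjective R φ (p, x) (X (p, x)) = J p x)
    (hJle : ∀ p x y, J p x ≤ coupledObjective R φ (p, x) y) (p : E) (x : ℝ) :
    HasDerivAt (J p) (derivSnd φ (X (p, x), x)) x := by
  have hXp : Differentiable ℝ fun x => X (p, x) :=
    hX.comp ((differentiable_const p).prodMk differentiable_id)
  have hJ : Differentiable ℝ (J p) := by
    rw [← funext (hJX p)]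
    exact ((hR.differentiable p).comp hXp).add
      ((hφ.differentiable two_ne_zero).comp (hXp.prodMk differentiable_id))
  exact hasDerivAt_of_le_of_eq (hJ x)
    (((hasC1DerivSnd_of_contDiff hφ).hasDerivAt (X (p, x)) x).const_add (R p (X (p, x))))
    (fun x' => hJle p x' (X (p, x))) (hJX p x).symm

theorem derivSnd_partialMin (hR : HasC1DerivSnd R)
    (hφ : ContDiff ℝ 2 fun q : ℝ × ℝ => φ q.1 q.2) (hX : Differentiable ℝ X)
    (hJX : ∀ p x, coupledObjective R φ (p, x) (X (p, x)) = J p x)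
    (hJle : ∀ p x y, J p x ≤ coupledObjective R φ (p, x) y) :
    derivSnd J = fun a => derivSnd φ (X a, a.2) :=
  funext fun a => (hasDerivAt_partialMin hR hφ hX hJX hJle a.1 a.2).deriv

theorem hasC1DerivSnd_partialMin (hR : HasC1DerivSnd R)
    (hφ : ContDiff ℝ 2 fun q : ℝ × ℝ => φ q.1 q.2) (hX : ContDiff ℝ 1 X)
    (hJX : ∀ p x, coupledObjective R φ (p, x) (X (p, x)) = J p x)
    (hJle : ∀ p x y, J p x ≤ coupledObjective R φ (p, x) y) : HasC1DerivSnd J where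
  differentiable p x := (hasDerivAt_partialMin hR hφ (hX.differentiable one_ne_zero)
    hJX hJle p x).differentiableAt
  contDiff := by
    rw [derivSnd_partialMin hR hφ (hX.differentiable one_ne_zero) hJX hJle]
    exact (hasC1DerivSnd_of_contDiff hφ).contDiff.comp (hX.prodMk contDiff_snd)

theorem fderiv_derivSnd_partialMin (hR : HasC1DerivSnd R)
    (hφ : ContDiff ℝ 2 fun q : ℝ × ℝ => φ q.1 q.2) (hX : Differentiable ℝ X)
    (hJX : ∀ p x, coupledObjective R φ (p, x) (X (p, x)) = J p x)
    (hJle : ∀ p x y, J p x ≤ coupledObjective R φ (p, x) y) (a v : E × ℝ) :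
    fderiv ℝ (derivSnd J) a v =
      fderiv ℝ X a v * crossDeriv φ 1 (X a) a.2 + v.2 * curvature φ (X a) a.2 := by
  have hcomp := ((hasC1DerivSnd_of_contDiff hφ).hasFDerivAt (X a, a.2)).comp a
    ((hX a).hasFDerivAt.prodMk hasFDerivAt_snd)
  rw [derivSnd_partialMin hR hφ hX hJX hJle, ← crossDeriv_smul_dir, smul_eq_mul, mul_one,
    ← fderiv_derivSnd_apply]
  exact DFunLike.congr_fun hcomp.fderiv v

/-- The second derivatives of a partial minimum are those of the Schur complement. -/
theorem exists_curvature_crossDeriv_partialMin [CompleteSpace E] (hR : HasC1DerivSnd R)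
    (hφ : ContDiff ℝ 2 fun q : ℝ × ℝ => φ q.1 q.2)
    (hpos : ∀ p x y, 0 < curvature R p y + curvature (flip φ) x y)
    (hmin : ∀ p x, IsLeast (Set.range (coupledObjective R φ (p, x))) (J p x)) :
    HasC1DerivSnd J ∧ ∀ p x, ∃ y,
      curvature J p x = curvature φ y x -
        crossDeriv φ 1 y x ^ 2 / (curvature R p y + curvature (flip φ) x y) ∧
      ∀ v, crossDeriv J v p x =
        -(crossDeriv φ 1 y x * crossDeriv R v p y /
          (curvature R p y + curvature (flip φ) x y)) := by
  choose X hJX using fun a : E × ℝ => (hmin a.1 a.2).1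
  replace hJX : ∀ p x, coupledObjective R φ (p, x) (X (p, x)) = J p x := fun p x => hJX (p, x)
  have hJle : ∀ p x y, J p x ≤ coupledObjective R φ (p, x) y :=
    fun p x y => (hmin p x).2 ⟨y, rfl⟩
  have hb := hasC1DerivSnd_coupledObjective hR hφ
  have hbpos : ∀ a y, 0 < curvature (coupledObjective R φ) a y := fun a y => by
    rw [curvature_coupledObjective hR hφ]
    exact hpos a.1 a.2 y
  have hXmin : ∀ a y, coupledObjective R φ a (X a) ≤ coupledObjective R φ a y :=
    fun a y => (hJX a.1 a.2).trans_le (hJle a.1 a.2 y)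
  have hXC1 := contDiff_argmin hb hbpos hXmin
  have hXd := hXC1.differentiable one_ne_zero
  refine ⟨hasC1DerivSnd_partialMin hR hφ hXC1 hJX hJle, fun p x => ⟨X (p, x), ?_, fun v => ?_⟩⟩
  · rw [curvature, fderiv_derivSnd_partialMin hR hφ hXd hJX hJle,
      fderiv_argmin hb hbpos hXmin (hXd _), crossDeriv_coupledObjective hR hφ,
      curvature_coupledObjective hR hφ, crossDeriv_zero_dir]
    ring
  · rw [crossDeriv, fderiv_derivSnd_partialMin hR hφ hXd hJX hJle,
      fderiv_argmin hb hbpos hXmin (hXd _), crossDeriv_coupledObjective hR hφ,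
      curvature_coupledObjective hR hφ]
    ring

end PartialMinimization

section NodeEstimates

variable {ι : Type*} {T : Finset ι} {a γ d D s : ι → ℝ} {b e k lam c : ℝ}

theorem add_le_mul_add_sum_of_dominant (hdom : ∑ u ∈ T, a u + k ≤ lam * (b * (e + ∑ u ∈ T, γ u)))
    (hslack : ∀ u ∈ T, b * (γ u - d u) ≤ a u) :
    (1 - lam) * (b * (e + ∑ u ∈ T, γ u)) + k ≤ b * (e + ∑ u ∈ T, d u) := by
  have hsum := sum_le_sum hslack
  rw [← mul_sum, sum_sub_distrib] at hsum
  linarith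

theorem abs_sum_le_of_dominant (hlam0 : 0 ≤ lam) (hlam1 : lam ≤ 1) (hc : 0 ≤ c) (hk : 0 ≤ k)
    (hdom : ∑ u ∈ T, a u + k ≤ lam * (b * (e + ∑ u ∈ T, γ u)))
    (hD : ∀ u ∈ T, |D u| ≤ s u + c * (a u - lam * (b * (γ u - d u)))) :
    |∑ u ∈ T, D u| ≤ ∑ u ∈ T, s u + lam * c * (b * (e + ∑ u ∈ T, d u) - lam * k) := by
  have hk' : lam * (lam * k) ≤ k :=
    (mul_le_of_le_one_left (by positivity) hlam1).trans (mul_le_of_le_one_left hk hlam1)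
  have hexcess : ∑ u ∈ T, (a u - lam * (b * (γ u - d u))) ≤
      lam * (b * (e + ∑ u ∈ T, d u) - lam * k) := by
    rw [sum_sub_distrib, ← mul_sum, ← mul_sum, sum_sub_distrib]
    linarith
  calc |∑ u ∈ T, D u| ≤ ∑ u ∈ T, (s u + c * (a u - lam * (b * (γ u - d u)))) :=
        (abs_sum_le_sum_abs _ _).trans (sum_le_sum hD)
    _ = ∑ u ∈ T, s u + c * ∑ u ∈ T, (a u - lam * (b * (γ u - d u))) := by
        rw [sum_add_distrib, ← mul_sum]
    _ ≤ ∑ u ∈ T, s u + c * (lam * (b * (e + ∑ u ∈ T, d u) - lam * k)) := by gcongr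
    _ = _ := by ring

theorem mul_sq_div_le_mul_abs {α κ h : ℝ} (hh : 0 < h) (hκ : α * |κ| ≤ b * h) :
    α * (κ ^ 2 / h) ≤ b * |κ| := by
  rw [mul_div_assoc', div_le_iff₀ hh, ← sq_abs]
  calc α * |κ| ^ 2 = α * |κ| * |κ| := by ring
    _ ≤ b * h * |κ| := by gcongr
    _ = b * |κ| * h := by ring

theorem abs_mul_div_le_of_abs_le {α κ h S : ℝ} (hh : 0 < h)
    (hS : |S| ≤ c * (b * h - lam * (α * |κ|))) :
    |κ * S / h| ≤ c * (b * |κ| - lam * (α * (κ ^ 2 / h))) := by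
  rw [abs_div, abs_mul, abs_of_pos hh, ← sq_abs κ]
  calc |κ| * |S| / h ≤ |κ| * (c * (b * h - lam * (α * |κ|))) / h := by gcongr
    _ = c * (b * |κ| - lam * (α * (|κ| ^ 2 / h))) := by field_simp

end NodeEstimates

section MessageBounds

variable {ι E : Type*} [NormedAddCommGroup E] [NormedSpace ℝ E]

/-- The invariant of a message `J` sent along an edge with factor `φ`, from a node of weight `a` to
a node of weight `b`. At every point, for some value `z` of the sender, the curvature of `J` falls
short of that of `φ` by at most what the coupling `∂²φ/∂z∂x` allows, and the derivative of `∂J/∂x`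
in the direction `v` of the perturbation is at most the source term `s` plus `c` times the
room that this leaves. -/
structure MessageBound (φ : ℝ → ℝ → ℝ) (a b lam c s : ℝ) (v : E) (J : E → ℝ → ℝ) : Prop where
  hasC1DerivSnd : HasC1DerivSnd J
  bound : ∀ p x, ∃ z,
    b * (curvature φ z x - curvature J p x) ≤ a * |crossDeriv φ 1 z x| ∧
    |crossDeriv J v p x| ≤
      s + c * (a * |crossDeriv φ 1 z x| - lam * (b * (curvature φ z x - curvature J p x)))

/-- Scaled diagonal dominance at a node of weight `b` in state `y`. The factors `φ u` of the edges
from the neighbors `u ∈ T`, of weights `a u`, are considered in all states of these neighbors;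
the remaining terms contribute `e` to the curvature and `k` to the weighted coupling. -/
def NodeDominant (T : Finset ι) (φ : ι → ℝ → ℝ → ℝ) (a : ι → ℝ) (b lam M y e k : ℝ) : Prop :=
  ∀ z : ι → ℝ, M ≤ e + ∑ u ∈ T, curvature (φ u) (z u) y ∧
    ∑ u ∈ T, a u * |crossDeriv (φ u) 1 (z u) y| + k ≤
      lam * (b * (e + ∑ u ∈ T, curvature (φ u) (z u) y))

variable {T : Finset ι} {φ : ι → ℝ → ℝ → ℝ} {a s : ι → ℝ} {b lam M y e k c C : ℝ}
  {v : E} {J : ι → E → ℝ → ℝ} {f : ℝ → ℝ}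

theorem NodeDominant.erase [DecidableEq ι] (h : NodeDominant T φ a b lam M y e k) {j : ι}
    (hj : j ∈ T) (x : ℝ) :
    NodeDominant (T.erase j) φ a b lam M y (e + curvature (φ j) x y)
      (k + a j * |crossDeriv (φ j) 1 x y|) := by
  intro z
  have hsum : ∀ H : ι → ℝ → ℝ, ∑ u ∈ T, H u (Function.update z j x u) =
      H j x + ∑ u ∈ T.erase j, H u (z u) := fun H => by
    rw [← add_sum_erase _ _ hj, Function.update_self]
    congr 1
    exact sum_congr rfl fun u hu => by rw [Function.update_of_ne (ne_of_mem_erase hu)]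
  obtain ⟨hM, hdom⟩ := h (Function.update z j x)
  rw [hsum fun u z => curvature (φ u) z y] at hM hdom
  rw [hsum fun u z => a u * |crossDeriv (φ u) 1 z y|] at hdom
  rw [add_assoc]
  exact ⟨hM, by linarith⟩

theorem NodeDominant.add_le_curvature (h : NodeDominant T φ a b lam M y e k) (hlam : lam ≤ 1)
    (hb : 0 ≤ b) (hJ : ∀ u ∈ T, MessageBound (φ u) (a u) b lam c (s u) v (J u)) (p : E) :
    (1 - lam) * (b * M) + k ≤ b * (e + ∑ u ∈ T, curvature (J u) p y) := by
  choose! z hz using fun u hu => (hJ u hu).bound p y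
  obtain ⟨hM, hdom⟩ := h z
  have : 0 ≤ 1 - lam := sub_nonneg.2 hlam
  calc (1 - lam) * (b * M) + k
      ≤ (1 - lam) * (b * (e + ∑ u ∈ T, curvature (φ u) (z u) y)) + k := by gcongr
    _ ≤ _ := add_le_mul_add_sum_of_dominant hdom fun u hu => (hz u hu).1

theorem NodeDominant.abs_sum_crossDeriv_le (h : NodeDominant T φ a b lam M y e k)
    (hlam0 : 0 ≤ lam) (hlam1 : lam ≤ 1) (hb : 0 ≤ b) (hk : 0 ≤ k) (hc : 0 ≤ c)
    (hcC : lam * c ≤ C) (hs : ∑ u ∈ T, s u ≤ (C - lam * c) * ((1 - lam) * (b * M)))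
    (hJ : ∀ u ∈ T, MessageBound (φ u) (a u) b lam c (s u) v (J u)) (p : E) :
    |∑ u ∈ T, crossDeriv (J u) v p y| ≤
      C * (b * (e + ∑ u ∈ T, curvature (J u) p y) - lam * k) := by
  have hroom : (1 - lam) * (b * M) ≤ b * (e + ∑ u ∈ T, curvature (J u) p y) - lam * k := by
    have := h.add_le_curvature hlam1 hb hJ p
    have := mul_le_of_le_one_left hk hlam1
    linarith
  choose! z hz using fun u hu => (hJ u hu).bound p y
  have : 0 ≤ C - lam * c := sub_nonneg.2 hcC
  set A := b * (e + ∑ u ∈ T, curvature (J u) p y) - lam * k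
  calc |∑ u ∈ T, crossDeriv (J u) v p y|
      ≤ ∑ u ∈ T, s u + lam * c * A :=
        abs_sum_le_of_dominant hlam0 hlam1 hc hk (h z).2 fun u hu => (hz u hu).2
    _ ≤ (C - lam * c) * ((1 - lam) * (b * M)) + lam * c * A := by gcongr
    _ ≤ (C - lam * c) * A + lam * c * A := by gcongr
    _ = C * A := by ring

theorem NodeDominant.curvature_pos (h : NodeDominant T φ a b lam M y e k) (hlam1 : lam < 1)
    (hM : 0 < M) (hb : 0 < b) (hk : 0 ≤ k)
    (hJ : ∀ u ∈ T, MessageBound (φ u) (a u) b lam c (s u) v (J u)) (p : E) :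
    0 < e + ∑ u ∈ T, curvature (J u) p y := by
  have hr : 0 < (1 - lam) * (b * M) := mul_pos (sub_pos.2 hlam1) (mul_pos hb hM)
  have := h.add_le_curvature hlam1.le hb.le hJ p
  exact pos_of_mul_pos_right (by linarith) hb.le

theorem differentiable_and_abs_fderiv_argmin_le [CompleteSpace E] (hf : ContDiff ℝ 2 f)
    (hlam0 : 0 ≤ lam) (hlam1 : lam < 1) (hM : 0 < M) (hb : 0 < b) (hc : 0 ≤ c)
    (hcC : lam * c ≤ C) (hs : ∑ u ∈ T, s u ≤ (C - lam * c) * ((1 - lam) * (b * M)))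
    (hdom : ∀ y, NodeDominant T φ a b lam M y (deriv (deriv f) y) 0)
    (hJ : ∀ u ∈ T, MessageBound (φ u) (a u) b lam c (s u) v (J u))
    {X : E → ℝ} (hX : ∀ p y, localObjective f T J p (X p) ≤ localObjective f T J p y) :
    Differentiable ℝ X ∧ ∀ p, |fderiv ℝ X p v| ≤ C * b := by
  have hJC1 : ∀ u ∈ T, HasC1DerivSnd (J u) := fun u hu => (hJ u hu).hasC1DerivSnd
  have hC1 := hasC1DerivSnd_localObjective hf hJC1
  have hpos : ∀ p y, 0 < curvature (localObjective f T J) p y := fun p y => by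
    rw [curvature_localObjective hf hJC1]
    exact (hdom y).curvature_pos hlam1 hM hb le_rfl hJ p
  have hXd := (contDiff_argmin hC1 hpos hX).differentiable one_ne_zero
  refine ⟨hXd, fun p => ?_⟩
  have hcross := (hdom (X p)).abs_sum_crossDeriv_le hlam0 hlam1.le hb.le le_rfl hc hcC hs hJ p
  rw [← crossDeriv_localObjective hf hJC1, ← curvature_localObjective hf hJC1, mul_zero,
    sub_zero, ← mul_assoc] at hcross
  rwa [fderiv_argmin hC1 hpos hX (hXd p), abs_div, abs_neg, abs_of_pos (hpos p (X p)),
    div_le_iff₀ (hpos p (X p))]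

theorem messageBound_partialMin [CompleteSpace E] [DecidableEq ι] (hf : ContDiff ℝ 2 f)
    {ψ : ℝ → ℝ → ℝ} (hψ : ContDiff ℝ 2 fun q : ℝ × ℝ => ψ q.1 q.2) {j : ι} (hj : j ∈ T)
    (hψφ : flip ψ = φ j) (ha : 0 ≤ a j)
    (hlam0 : 0 ≤ lam) (hlam1 : lam < 1) (hM : 0 < M) (hb : 0 < b) (hc : 0 ≤ c)
    (hcC : lam * c ≤ C) (hs : ∑ u ∈ T.erase j, s u ≤ (C - lam * c) * ((1 - lam) * (b * M)))
    (hdom : ∀ y, NodeDominant T φ a b lam M y (deriv (deriv f) y) 0)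
    (hJ : ∀ u ∈ T.erase j, MessageBound (φ u) (a u) b lam c (s u) v (J u)) {J' : E → ℝ → ℝ}
    (hmin : ∀ p x, IsLeast
      (Set.range (coupledObjective (localObjective f (T.erase j) J) ψ (p, x))) (J' p x)) :
    MessageBound ψ b (a j) lam C 0 v J' := by
  have hJC1 : ∀ u ∈ T.erase j, HasC1DerivSnd (J u) := fun u hu => (hJ u hu).hasC1DerivSnd
  -- Fixing the state `x` of the recipient, its coupling becomes the slack `k` in the dominance;
  -- it controls the Schur complement below.
  have hdom' : ∀ x y, NodeDominant (T.erase j) φ a b lam M y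
      (deriv (deriv f) y + curvature (flip ψ) x y) (a j * |crossDeriv ψ 1 y x|) := fun x y => by
    simpa only [hψφ, zero_add, ← crossDeriv_flip hψ] using (hdom y).erase hj x
  have hk : ∀ x y, 0 ≤ a j * |crossDeriv ψ 1 y x| := fun x y => mul_nonneg ha (abs_nonneg _)
  have hcurv : ∀ p x y, curvature (localObjective f (T.erase j) J) p y + curvature (flip ψ) x y =
      deriv (deriv f) y + curvature (flip ψ) x y + ∑ u ∈ T.erase j, curvature (J u) p y :=
    fun p x y => by rw [curvature_localObjective hf hJC1, add_right_comm]
  have hpos : ∀ p x y,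
      0 < curvature (localObjective f (T.erase j) J) p y + curvature (flip ψ) x y :=
    fun p x y => hcurv p x y ▸ (hdom' x y).curvature_pos hlam1 hM hb (hk x y) hJ p
  obtain ⟨hJ'C1, hJ'⟩ := exists_curvature_crossDeriv_partialMin
    (hasC1DerivSnd_localObjective hf hJC1) hψ hpos hmin
  refine ⟨hJ'C1, fun p x => ?_⟩
  obtain ⟨y, hcurvJ', hcrossJ'⟩ := hJ' p x
  have hle := (hdom' x y).add_le_curvature hlam1.le hb.le hJ p
  have hcross := (hdom' x y).abs_sum_crossDeriv_le hlam0 hlam1.le hb.le (hk x y) hc hcC hs hJ p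
  rw [← hcurv] at hle hcross
  rw [← crossDeriv_localObjective hf hJC1] at hcross
  refine ⟨y, ?_⟩
  rw [hcurvJ', hcrossJ', sub_sub_cancel, abs_neg, zero_add]
  have hk' : a j * |crossDeriv ψ 1 y x| ≤
      b * (curvature (localObjective f (T.erase j) J) p y + curvature (flip ψ) x y) :=
    (le_add_of_nonneg_left (mul_nonneg (sub_nonneg.2 hlam1.le) (by positivity))).trans hle
  exact ⟨mul_sq_div_le_mul_abs (hpos p x y) hk', abs_mul_div_le_of_abs_le (hpos p x y) hcross⟩

end MessageBounds

section ScaledDominance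

theorem pd_eq_fderiv {ι : Type*} [Finite ι] [DecidableEq ι] {F : (ι → ℝ) → ℝ} {x : ι → ℝ}
    (hF : DifferentiableAt ℝ F x) (i : ι) : pd F i x = fderiv ℝ F x (Pi.single i 1) := by
  have := Fintype.ofFinite ι
  have hF' : HasFDerivAt F (fderiv ℝ F x) (Function.update x i (x i)) := by
    rw [Function.update_eq_self]
    exact hF.hasFDerivAt
  exact (hF'.comp_hasDerivAt (x i) (hasDerivAt_update x i (x i))).deriv

variable {V : Type*} [DecidableEq V]

theorem hasDerivAt_update_apply (x : V → ℝ) (i j : V) {φ : ℝ → ℝ} {φ' : ℝ}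
    (hφ : HasDerivAt φ φ' (x i)) :
    HasDerivAt (fun y => φ (Function.update x j y i)) (if i = j then φ' else 0) (x j) := by
  split_ifs with hij
  · subst hij
    simpa using hφ
  · simpa [hij] using hasDerivAt_const (x j) (φ (x i))

theorem hasDerivAt_edge_update {φ : ℝ → ℝ → ℝ} (hφ : HasC1DerivSnd φ)
    (hφ' : HasC1DerivSnd (flip φ)) {i l : V} (hil : i ≠ l) (x : V → ℝ) (j : V) :
    HasDerivAt (fun y => φ (Function.update x j y i) (Function.update x j y l))
      ((if i = j then derivSnd (flip φ) (x l, x i) else 0) +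
        if l = j then derivSnd φ (x i, x l) else 0) (x j) := by
  by_cases hi : i = j
  · subst hi
    simpa [hil.symm] using! hφ'.hasDerivAt (x l) (x i)
  · by_cases hl : l = j
    · subst hl
      simpa [hi] using hφ.hasDerivAt (x i) (x l)
    · simpa [hi, hl] using hasDerivAt_const (x j) (φ (x i) (x l))

variable [Fintype V] (G : SimpleGraph V) [DecidableRel G.Adj]

/-- The objective of the pairwise separable program with factors `f i` and `g i j`. The sum runs
over directed edges, so each edge is counted twice. -/
noncomputable def pairwiseObjective (f : V → ℝ → ℝ) (g : V → V → ℝ → ℝ → ℝ) (x : V → ℝ) : ℝ :=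
  (∑ i, f i (x i)) + (1 / 2) * ∑ i, ∑ j ∈ G.neighborFinset i, g i j (x i) (x j)

variable {G} {f : V → ℝ → ℝ} {g : V → V → ℝ → ℝ → ℝ}

theorem pd_pairwiseObjective (hf : ∀ i, Differentiable ℝ (f i))
    (hg : ∀ i j, G.Adj i j → HasC1DerivSnd (g i j))
    (hg_symm : ∀ i j, G.Adj i j → flip (g i j) = g j i) (j : V) (x : V → ℝ) :
    pd (pairwiseObjective G f g) j x =
      deriv (f j) (x j) + ∑ u ∈ G.neighborFinset j, derivSnd (g u j) (x u, x j) := by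
  have hnode : ∀ i, HasDerivAt (fun y => f i (Function.update x j y i))
      (if i = j then deriv (f i) (x i) else 0) (x j) :=
    fun i => hasDerivAt_update_apply x i j (hf i (x i)).hasDerivAt
  have hedge : ∀ i, ∀ l ∈ G.neighborFinset i,
      HasDerivAt (fun y => g i l (Function.update x j y i) (Function.update x j y l))
        ((if i = j then derivSnd (g l i) (x l, x i) else 0) +
          if l = j then derivSnd (g i l) (x i, x l) else 0) (x j) := fun i l hl => by
    have hil : G.Adj i l := (G.mem_neighborFinset i l).1 hl
    have hflip := hg_symm i l hil
    rw [← hflip]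
    exact hasDerivAt_edge_update (hg i l hil) (hflip ▸ hg l i hil.symm) hil.ne x j
  refine ((HasDerivAt.fun_sum fun i _ => hnode i).add
    ((HasDerivAt.fun_sum fun i _ => HasDerivAt.fun_sum (hedge i)).const_mul
      (1 / 2 : ℝ))).deriv.trans ?_
  have hleft : ∑ i, ∑ l ∈ G.neighborFinset i,
      (if i = j then derivSnd (g l i) (x l, x i) else 0) =
        ∑ u ∈ G.neighborFinset j, derivSnd (g u j) (x u, x j) := by
    simp
  have hright : ∑ i, ∑ l ∈ G.neighborFinset i,
      (if l = j then derivSnd (g i l) (x i, x l) else 0) =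
        ∑ u ∈ G.neighborFinset j, derivSnd (g u j) (x u, x j) := by
    rw [← hleft]
    exact sum_comm' fun i l => by simp [G.adj_comm]
  simp only [sum_add_distrib]
  rw [hleft, hright, Fintype.sum_ite_eq' j fun i => deriv (f i) (x i)]
  ring

theorem pd2_pairwiseObjective (hf : ∀ i, ContDiff ℝ 2 (f i))
    (hg : ∀ i j, G.Adj i j → HasC1DerivSnd (g i j))
    (hg_symm : ∀ i j, G.Adj i j → flip (g i j) = g j i) (i j : V) (x : V → ℝ) :
    pd2 (pairwiseObjective G f g) i j x =
      (Pi.single i 1 : V → ℝ) j * deriv (deriv (f j)) (x j) +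
        ∑ u ∈ G.neighborFinset j, fderiv ℝ (derivSnd (g u j)) (x u, x j)
          ((Pi.single i 1 : V → ℝ) u, (Pi.single i 1 : V → ℝ) j) := by
  have hgj : ∀ u ∈ G.neighborFinset j, HasC1DerivSnd (g u j) :=
    fun u hu => hg u j ((G.mem_neighborFinset j u).1 hu).symm
  have hJ : ∀ u ∈ G.neighborFinset j, HasC1DerivSnd fun x : V → ℝ => g u j (x u) :=
    fun u hu => (hgj u hu).comp_clm (.proj (φ := fun _ : V => ℝ) u)
  set b := localObjective (f j) (G.neighborFinset j) fun u (x : V → ℝ) => g u j (x u) with hb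
  have hpd : pd (pairwiseObjective G f g) j = derivSnd b ∘ fun x => (x, x j) := funext fun x => by
    rw [pd_pairwiseObjective (fun i => (hf i).differentiable two_ne_zero) hg hg_symm,
      Function.comp_apply, hb,
      derivSnd_localObjective ((hf j).differentiable two_ne_zero) hJ]
    rfl
  have hcomp := HasFDerivAt.comp (f := fun x : V → ℝ => (x, x j)) x
    ((hasC1DerivSnd_localObjective (hf j) hJ).hasFDerivAt (x, x j))
    ((hasFDerivAt_id x).prodMk (hasFDerivAt_apply j x))
  rw [pd2, hpd, pd_eq_fderiv hcomp.differentiableAt]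
  refine (DFunLike.congr_fun hcomp.fderiv _).trans
    ((fderiv_derivSnd_localObjective (hf j) hJ _ _).trans ?_)
  exact congrArg _ (sum_congr rfl fun u hu =>
    fderiv_derivSnd_comp_clm (hgj u hu) (.proj (φ := fun _ : V => ℝ) u) x (Pi.single i 1) (x j) _)

theorem pd2_pairwiseObjective_self (hf : ∀ i, ContDiff ℝ 2 (f i))
    (hg : ∀ i j, G.Adj i j → HasC1DerivSnd (g i j))
    (hg_symm : ∀ i j, G.Adj i j → flip (g i j) = g j i) (i : V) (x : V → ℝ) :
    pd2 (pairwiseObjective G f g) i i x =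
      deriv (deriv (f i)) (x i) + ∑ u ∈ G.neighborFinset i, curvature (g u i) (x u) (x i) := by
  rw [pd2_pairwiseObjective hf hg hg_symm, Pi.single_eq_same, one_mul]
  refine congrArg _ (sum_congr rfl fun u hu => ?_)
  rw [Pi.single_eq_of_ne ((G.mem_neighborFinset i u).1 hu).ne', curvature]

theorem pd2_pairwiseObjective_of_adj (hf : ∀ i, ContDiff ℝ 2 (f i))
    (hg : ∀ i j, G.Adj i j → HasC1DerivSnd (g i j))
    (hg_symm : ∀ i j, G.Adj i j → flip (g i j) = g j i) {i j : V} (hij : G.Adj i j)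
    (x : V → ℝ) :
    pd2 (pairwiseObjective G f g) i j x = crossDeriv (g i j) 1 (x i) (x j) := by
  have hi : i ∈ G.neighborFinset j := (G.mem_neighborFinset j i).2 hij.symm
  rw [pd2_pairwiseObjective hf hg hg_symm, Pi.single_eq_of_ne hij.ne', zero_mul, zero_add,
    sum_eq_single_of_mem i hi fun u _ hu => by rw [Pi.single_eq_of_ne hu, Prod.mk_zero_zero,
      map_zero], Pi.single_eq_same, crossDeriv]

theorem nodeDominant_of_scaledDominant (hf : ∀ i, ContDiff ℝ 2 (f i))
    (hg : ∀ i j, G.Adj i j → ContDiff ℝ 2 fun q : ℝ × ℝ => g i j q.1 q.2)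
    (hg_symm : ∀ i j, G.Adj i j → flip (g i j) = g j i) {w : V → ℝ} {lam M : ℝ}
    (hw : ∀ i, 0 ≤ w i) (hM : ∀ i x, M ≤ pd2 (pairwiseObjective G f g) i i x)
    (hdd : ∀ i x, ∑ j ∈ univ.erase i, w j * |pd2 (pairwiseObjective G f g) i j x| ≤
      lam * w i * pd2 (pairwiseObjective G f g) i i x) (i : V) (y : ℝ) :
    NodeDominant (G.neighborFinset i) (fun u => g u i) w (w i) lam M y
      (deriv (deriv (f i)) y) 0 := by
  intro z
  have hg' : ∀ i j, G.Adj i j → HasC1DerivSnd (g i j) :=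
    fun i j hij => hasC1DerivSnd_of_contDiff (hg i j hij)
  set x := Function.update z i y
  have hxi : x i = y := Function.update_self i y z
  have hxu : ∀ u ∈ G.neighborFinset i, x u = z u := fun u hu =>
    Function.update_of_ne ((G.mem_neighborFinset i u).1 hu).ne' y z
  have hself : pd2 (pairwiseObjective G f g) i i x = deriv (deriv (f i)) y +
      ∑ u ∈ G.neighborFinset i, curvature (g u i) (z u) y := by
    rw [pd2_pairwiseObjective_self hf hg' hg_symm, hxi]
    exact congrArg _ (sum_congr rfl fun u hu => by rw [hxu u hu])
  have hadj : ∀ u ∈ G.neighborFinset i,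
      |crossDeriv (g u i) 1 (z u) y| = |pd2 (pairwiseObjective G f g) i u x| := fun u hu => by
    have hiu : G.Adj i u := (G.mem_neighborFinset i u).1 hu
    rw [pd2_pairwiseObjective_of_adj hf hg' hg_symm hiu, ← hg_symm i u hiu,
      crossDeriv_flip (hg i u hiu), hxi, hxu u hu]
  rw [← hself, add_zero, ← mul_assoc]
  refine ⟨hM i x, le_trans ?_ (hdd i x)⟩
  rw [sum_congr rfl fun u hu => by rw [hadj u hu]]
  refine sum_le_sum_of_subset_of_nonneg (fun u hu => ?_) fun u _ _ =>
    mul_nonneg (hw u) (abs_nonneg _)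
  exact mem_erase.2 ⟨((G.mem_neighborFinset i u).1 hu).ne', mem_univ u⟩

end ScaledDominance

section MinSum

theorem derivSnd_mul : derivSnd (fun r x : ℝ => r * x) = Prod.fst :=
  funext fun q => by simp [derivSnd]

theorem hasC1DerivSnd_mul : HasC1DerivSnd fun r x : ℝ => r * x where
  differentiable r := differentiable_id.const_mul r
  contDiff := derivSnd_mul ▸ contDiff_fst

theorem fderiv_derivSnd_mul (q v : ℝ × ℝ) :
    fderiv ℝ (derivSnd fun r x : ℝ => r * x) q v = v.1 := by
  rw [derivSnd_mul, fderiv_fst]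
  rfl

theorem messageBound_add_mul {E : Type*} [NormedAddCommGroup E] [NormedSpace ℝ E]
    {φ : ℝ → ℝ → ℝ} (hφ : HasC1DerivSnd φ) {h : ℝ → ℝ} (hh : ContDiff ℝ 2 h)
    (hcurv : ∀ x, ∃ z, deriv (deriv (φ z)) x ≤ deriv (deriv h) x) (L : E →L[ℝ] ℝ)
    {a b lam s : ℝ} (ha : 0 ≤ a) (hb : 0 ≤ b) {v : E} (hs : |L v| ≤ s) :
    MessageBound φ a b lam 0 s v fun p x => h x + L p * x := by
  have hlin : ∀ u ∈ (univ : Finset Unit), HasC1DerivSnd fun (p : E) x => L p * x :=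
    fun _ _ => hasC1DerivSnd_mul.comp_clm L
  have hlocal : (fun p x => h x + L p * x) =
      localObjective h (univ : Finset Unit) fun _ p x => L p * x := by
    funext p x
    simp [localObjective]
  have hfderiv : ∀ p x u r, fderiv ℝ (derivSnd fun p x => h x + L p * x) (p, x) (u, r) =
      r * deriv (deriv h) x + L u := fun p x u r => by
    rw [hlocal, fderiv_derivSnd_localObjective hh hlin, Fintype.sum_unique,
      fderiv_derivSnd_comp_clm hasC1DerivSnd_mul, fderiv_derivSnd_mul]
  refine ⟨hlocal ▸ hasC1DerivSnd_localObjective hh hlin, fun p x => ?_⟩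
  obtain ⟨z, hz⟩ := hcurv x
  have hJcurv : curvature φ z x ≤ curvature (fun p x => h x + L p * x) p x := by
    rw [curvature_eq_deriv_deriv hφ, curvature, hfderiv, one_mul, map_zero, add_zero]
    exact hz
  refine ⟨z, ?_, ?_⟩
  · exact (mul_nonpos_of_nonneg_of_nonpos hb (sub_nonpos.2 hJcurv)).trans
      (mul_nonneg ha (abs_nonneg _))
  · rwa [crossDeriv, hfderiv, zero_mul, zero_add, zero_mul, add_zero]

variable {V : Type*} [Fintype V] {G : SimpleGraph V} [DecidableRel G.Adj]
  {f : V → ℝ → ℝ} {g : V → V → ℝ → ℝ → ℝ} {w : V → ℝ} {lam M K : ℝ}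
  {E : Type*} [NormedAddCommGroup E] [NormedSpace ℝ E] {v : E} {J J' : V → V → E → ℝ → ℝ}

/-- A pairwise program with `C²` factors, stored for both orientations of each edge, which is
`(lam, w)`-scaled diagonally dominant; see `nodeDominant_of_scaledDominant` for the form in which
the dominance is expressed. -/
structure IsDominantProgram (G : SimpleGraph V) [DecidableRel G.Adj] (f : V → ℝ → ℝ)
    (g : V → V → ℝ → ℝ → ℝ) (w : V → ℝ) (lam M : ℝ) : Prop where
  contDiff_node : ∀ i, ContDiff ℝ 2 (f i)
  contDiff_edge : ∀ i j, G.Adj i j → ContDiff ℝ 2 fun q : ℝ × ℝ => g i j q.1 q.2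
  flip_edge : ∀ i j, G.Adj i j → flip (g i j) = g j i
  weight_pos : ∀ i, 0 < w i
  nonneg : 0 ≤ lam
  lt_one : lam < 1
  curvature_pos : 0 < M
  nodeDominant : ∀ i y, NodeDominant (G.neighborFinset i) (fun u => g u i) w (w i) lam M y
    (deriv (deriv (f i)) y) 0

/-- The messages `J` satisfy `MessageBound` with constants such that the estimate at a node `i`
computed from them has derivative at most `K * w i` in the direction `v`. -/
def HasSensitivityBound (G : SimpleGraph V) [DecidableRel G.Adj] (g : V → V → ℝ → ℝ → ℝ)
    (w : V → ℝ) (lam M K : ℝ) (v : E) (J : V → V → E → ℝ → ℝ) : Prop :=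
  ∃ (c : ℝ) (s : V → V → ℝ), 0 ≤ c ∧ lam * c ≤ K ∧ (∀ i j, 0 ≤ s i j) ∧
    (∀ i, ∑ u ∈ G.neighborFinset i, s u i ≤ (K - lam * c) * ((1 - lam) * (w i * M))) ∧
    ∀ i j, G.Adj i j → MessageBound (g i j) (w i) (w j) lam c (s i j) v (J i j)

theorem HasSensitivityBound.abs_fderiv_argmin_le [CompleteSpace E]
    (h : IsDominantProgram G f g w lam M) (hJ : HasSensitivityBound G g w lam M K v J)
    {i : V} {X : E → ℝ} (hX : ∀ p y,
      localObjective (f i) (G.neighborFinset i) (fun u => J u i) p (X p) ≤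
        localObjective (f i) (G.neighborFinset i) (fun u => J u i) p y) :
    Differentiable ℝ X ∧ ∀ p, |fderiv ℝ X p v| ≤ K * w i := by
  obtain ⟨c, s, hc, hcK, -, hs, hbound⟩ := hJ
  exact differentiable_and_abs_fderiv_argmin_le (h.contDiff_node i) h.nonneg h.lt_one
    h.curvature_pos (h.weight_pos i) hc hcK (hs i) (h.nodeDominant i)
    (fun u hu => hbound u i ((G.mem_neighborFinset i u).1 hu).symm) hX

theorem hasSensitivityBound_initial (h : IsDominantProgram G f g w lam M)
    {J0 : V → V → ℝ → ℝ} (hJ0 : ∀ i j, G.Adj i j → ContDiff ℝ 2 (J0 i j))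
    (hJ0conv : ∀ i j, G.Adj i j → ∀ x, ∃ z,
      deriv (deriv (g i j z)) x ≤ deriv (deriv (J0 i j)) x)
    {J : V → V → (EdgeDir G → ℝ) → ℝ → ℝ}
    (hJ : ∀ i j (h : G.Adj i j) p x, J i j p x = J0 i j x + p ⟨(i, j), h⟩ * x)
    (hK : 0 ≤ K) {v : EdgeDir G → ℝ} {s : V → V → ℝ} (hs0 : ∀ i j, 0 ≤ s i j)
    (hvs : ∀ i j (h : G.Adj i j), |v ⟨(i, j), h⟩| ≤ s i j)
    (hs : ∀ i, ∑ u ∈ G.neighborFinset i, s u i ≤ K * ((1 - lam) * (w i * M))) :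
    HasSensitivityBound G g w lam M K v J := by
  refine ⟨0, s, le_rfl, by rwa [mul_zero], hs0, by simpa using hs, fun i j hij => ?_⟩
  rw [funext fun p => funext (hJ i j hij p)]
  exact messageBound_add_mul (hasC1DerivSnd_of_contDiff (h.contDiff_edge i j hij)) (hJ0 i j hij)
    (hJ0conv i j hij) (.proj (φ := fun _ : EdgeDir G => ℝ) ⟨(i, j), hij⟩) (h.weight_pos i).le
    (h.weight_pos j).le (hvs i j hij)

variable [DecidableEq V]

theorem sum_neighborFinset_ite_eq_edge (e : EdgeDir G) (i : V) :
    ∑ u ∈ G.neighborFinset i, (if (u, i) = e.1 then (1 : ℝ) else 0) =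
      if i = e.1.2 then 1 else 0 := by
  have hadj : G.Adj e.1.2 e.1.1 := e.2.symm
  split_ifs with hi
  · subst hi
    simp [Prod.ext_iff, hadj]
  · simp [Prod.ext_iff, hi]

theorem hasSensitivityBound_initial_single (h : IsDominantProgram G f g w lam M)
    {J0 : V → V → ℝ → ℝ} (hJ0 : ∀ i j, G.Adj i j → ContDiff ℝ 2 (J0 i j))
    (hJ0conv : ∀ i j, G.Adj i j → ∀ x, ∃ z,
      deriv (deriv (g i j z)) x ≤ deriv (deriv (J0 i j)) x)
    {J : V → V → (EdgeDir G → ℝ) → ℝ → ℝ}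
    (hJ : ∀ i j (h : G.Adj i j) p x, J i j p x = J0 i j x + p ⟨(i, j), h⟩ * x)
    (e : EdgeDir G) :
    HasSensitivityBound G g w lam M (1 / ((1 - lam) * (w e.1.2 * M))) (Pi.single e 1) J := by
  have hr : ∀ i, 0 < (1 - lam) * (w i * M) :=
    fun i => mul_pos (sub_pos.2 h.lt_one) (mul_pos (h.weight_pos i) h.curvature_pos)
  refine hasSensitivityBound_initial (s := fun i j => if (i, j) = e.1 then 1 else 0) h hJ0 hJ0conv
    hJ (one_div_nonneg.2 (hr e.1.2).le) (fun i j => by positivity)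
    (fun i j hij => by simp [Pi.single_apply, Subtype.ext_iff, apply_ite abs]) fun i => ?_
  rw [sum_neighborFinset_ite_eq_edge]
  split_ifs with hi
  · rw [hi, one_div_mul_cancel (hr _).ne']
  · exact mul_nonneg (one_div_nonneg.2 (hr _).le) (hr i).le

/-- The messages `J'` are obtained from the messages `J` by a min-sum update. -/
def IsMinSumUpdate (G : SimpleGraph V) [DecidableRel G.Adj] (f : V → ℝ → ℝ)
    (g : V → V → ℝ → ℝ → ℝ) (J J' : V → V → E → ℝ → ℝ) : Prop :=
  ∀ i j, G.Adj i j → ∀ p x, IsLeast (Set.range (coupledObjective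
    (localObjective (f i) ((G.neighborFinset i).erase j) fun u => J u i) (g i j) (p, x)))
    (J' i j p x)

theorem HasSensitivityBound.update [CompleteSpace E] (h : IsDominantProgram G f g w lam M)
    (hJ : HasSensitivityBound G g w lam M K v J) (hJ' : IsMinSumUpdate G f g J J') :
    HasSensitivityBound G g w lam M (K * lam) v J' := by
  obtain ⟨c, s, hc, hcK, hs0, hs, hbound⟩ := hJ
  have hK : 0 ≤ K := (mul_nonneg h.nonneg hc).trans hcK
  refine ⟨K, 0, hK, (mul_comm lam K).le, fun _ _ => le_rfl, fun i => ?_, fun i j hij => ?_⟩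
  · simp [mul_comm lam K]
  · have hsj : ∑ u ∈ (G.neighborFinset i).erase j, s u i ≤ ∑ u ∈ G.neighborFinset i, s u i :=
      sum_le_sum_of_subset_of_nonneg (erase_subset j _) fun u _ _ => hs0 u i
    exact messageBound_partialMin (h.contDiff_node i) (h.contDiff_edge i j hij)
      ((G.mem_neighborFinset i j).2 hij) (h.flip_edge i j hij) (h.weight_pos j).le h.nonneg
      h.lt_one h.curvature_pos (h.weight_pos i) hc hcK (hsj.trans (hs i)) (h.nodeDominant i)
      (fun u hu => hbound u i ((G.mem_neighborFinset i u).1 (mem_of_mem_erase hu)).symm)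
      (hJ' i j hij)

theorem HasSensitivityBound.iterate [CompleteSpace E] (h : IsDominantProgram G f g w lam M)
    {J : ℕ → V → V → E → ℝ → ℝ} (hJ0 : HasSensitivityBound G g w lam M K v (J 0))
    (hJ : ∀ t, IsMinSumUpdate G f g (J t) (J (t + 1))) (t : ℕ) :
    HasSensitivityBound G g w lam M (K * lam ^ t) v (J t) := by
  induction t with
  | zero => simpa using hJ0
  | succ t ih =>
    rw [pow_succ, ← mul_assoc]
    exact ih.update h (hJ t)

end MinSum

theorem div_le_sup_div_inf {ι : Type*} [Fintype ι] [Nonempty ι] {w : ι → ℝ}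
    (hw : ∀ i, 0 < w i) (i j : ι) :
    w i / w j ≤ univ.sup' univ_nonempty w / univ.inf' univ_nonempty w := by
  have hinf : 0 < univ.inf' univ_nonempty w := (lt_inf'_iff univ_nonempty).2 fun u _ => hw u
  have hsup : w i ≤ univ.sup' univ_nonempty w := le_sup' w (mem_univ i)
  exact div_le_div₀ ((hw i).le.trans hsup) hsup hinf (inf'_le w (mem_univ j))

theorem minSum_perturbed_sensitivity_general
    {V : Type*} [Fintype V] [DecidableEq V] {G : SimpleGraph V} [DecidableRel G.Adj]
    {f : V → ℝ → ℝ} {g : V → V → ℝ → ℝ → ℝ}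
    (hf : ∀ i, ContDiff ℝ 2 (f i))
    (hg : ∀ i j, G.Adj i j → ContDiff ℝ 2 fun q : ℝ × ℝ => g i j q.1 q.2)
    (hg_symm : ∀ i j, G.Adj i j → flip (g i j) = g j i)
    {M : ℝ} (hM : 0 < M) (hMle : ∀ i x, M ≤ pd2 (pairwiseObjective G f g) i i x)
    {lam : ℝ} {w : V → ℝ} (hlam0 : 0 ≤ lam) (hlam1 : lam < 1) (hw : ∀ i, 0 < w i)
    (hdd : ∀ i x, ∑ j ∈ univ.erase i, w j * |pd2 (pairwiseObjective G f g) i j x| ≤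
      lam * w i * pd2 (pairwiseObjective G f g) i i x)
    {J0 : V → V → ℝ → ℝ} (hJ0 : ∀ i j, G.Adj i j → ContDiff ℝ 2 (J0 i j))
    (hJ0conv : ∀ i j, G.Adj i j → ∀ x, ∃ z,
      deriv (deriv (g i j z)) x ≤ deriv (deriv (J0 i j)) x)
    {JP : ℕ → V → V → (EdgeDir G → ℝ) → ℝ → ℝ}
    (hJP0 : ∀ i j (h : G.Adj i j) p x, JP 0 i j p x = J0 i j x + p ⟨(i, j), h⟩ * x)
    (hJPrec : ∀ t i j, G.Adj i j → ∀ p x,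
      IsLeast (Set.range fun y => f i y + g i j y x +
        ∑ u ∈ (G.neighborFinset i).erase j, JP t u i p y) (JP (t + 1) i j p x))
    {xEst : ℕ → V → (EdgeDir G → ℝ) → ℝ}
    (hxEst : ∀ t i p y, f i (xEst t i p) + ∑ u ∈ G.neighborFinset i, JP t u i p (xEst t i p) ≤
      f i y + ∑ u ∈ G.neighborFinset i, JP t u i p y) (t : ℕ) (r : V) :
    Differentiable ℝ (xEst t r) ∧
      ∀ p e, |pd (xEst t r) e p| ≤ 1 / M * (w r / w e.1.2) * (lam ^ t / (1 - lam)) := by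
  have hprogram : IsDominantProgram G f g w lam M :=
    { contDiff_node := hf
      contDiff_edge := hg
      flip_edge := hg_symm
      weight_pos := hw
      nonneg := hlam0
      lt_one := hlam1
      curvature_pos := hM
      nodeDominant :=
        nodeDominant_of_scaledDominant hf hg hg_symm (fun i => (hw i).le) hMle hdd }
  have hupdate : ∀ t, IsMinSumUpdate G f g (JP t) (JP (t + 1)) := fun t i j hij p x => by
    convert hJPrec t i j hij p x using 3
    exact add_right_comm _ _ _
  have hzero : HasSensitivityBound G g w lam M 0 0 (JP 0) := hasSensitivityBound_initial (s := 0)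
    hprogram hJ0 hJ0conv hJP0 le_rfl (by simp) (by simp) (by simp)
  have hdiff : Differentiable ℝ (xEst t r) :=
    ((hzero.iterate hprogram hupdate t).abs_fderiv_argmin_le hprogram (hxEst t r)).1
  refine ⟨hdiff, fun p e => ?_⟩
  have hbound := (hasSensitivityBound_initial_single hprogram hJ0 hJ0conv hJP0 e).iterate
    hprogram hupdate t
  rw [pd_eq_fderiv (hdiff p)]
  refine ((hbound.abs_fderiv_argmin_le hprogram (hxEst t r)).2 p).trans_eq ?_
  field_simp

/-- **Sensitivity of the min-sum estimates to the perturbation** (Lemma 3 of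
Moallemi–Van Roy).  For a `(λ,w)`-scaled diagonally dominant pairwise separable convex
program, the perturbed estimate `p ↦ x⁽ᵗ⁾_r(p)` is differentiable and
`|∂x⁽ᵗ⁾_r(p)/∂p_{u→v}| ≤ K λᵗ/(1-λ)` for every `p`, `r`, `(u,v) ∈ E⃗` and `t ≥ 0`. -/
theorem minSum_perturbed_sensitivity
    {V : Type*} [Fintype V] [DecidableEq V] [Nonempty V]
    (G : SimpleGraph V) [DecidableRel G.Adj]
    -- the factors of the pairwise separable convex program
    (f : V → ℝ → ℝ) (g : V → V → ℝ → ℝ → ℝ)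
    (hf_sconv : ∀ i, StrictConvexOn ℝ Set.univ (f i))
    (hf_coer : ∀ i, Tendsto (f i) (cocompact ℝ) atTop)
    (hf_smooth : ∀ i, ContDiff ℝ 2 (f i))
    (hg_conv : ∀ i j, G.Adj i j → ConvexOn ℝ Set.univ (fun q : ℝ × ℝ => g i j q.1 q.2))
    (hg_smooth : ∀ i j, G.Adj i j → ContDiff ℝ 2 (fun q : ℝ × ℝ => g i j q.1 q.2))
    (hg_symm : ∀ i j, G.Adj i j → ∀ a b : ℝ, g i j a b = g j i b a)
    -- the objective function
    (F : (V → ℝ) → ℝ)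
    (hF : F = fun x => (∑ i, f i (x i)) +
      (1 / 2) * ∑ i, ∑ j ∈ G.neighborFinset i, g i j (x i) (x j))
    -- `M = min_i inf_x ∂²F/∂x_i²(x) > 0`
    (M : ℝ) (hM : 0 < M) (hMle : ∀ (i : V) (x : V → ℝ), M ≤ pd2 F i i x)
    -- scaled diagonal dominance
    (lam : ℝ) (w : V → ℝ) (hlam0 : 0 < lam) (hlam1 : lam < 1) (hw : ∀ i, 0 < w i)
    (hdd : ∀ (i : V) (x : V → ℝ),
      ∑ j ∈ univ.erase i, w j * |pd2 F i j x| ≤ lam * w i * pd2 F i i x)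
    -- the initial messages and the initialization assumption
    (J0 : V → V → ℝ → ℝ)
    (hJ0smooth : ∀ i j, G.Adj i j → ContDiff ℝ 2 (J0 i j))
    (hJ0conv : ∀ i j, G.Adj i j → ∃ z : ℝ, ∀ xj : ℝ,
      deriv (deriv (fun b => g i j z b)) xj ≤ deriv (deriv (J0 i j)) xj)
    -- the perturbed min-sum messages and their update rule (minima are attained)
    (JP : ℕ → V → V → (EdgeDir G → ℝ) → ℝ → ℝ)
    (hJP0 : ∀ (i j : V) (h : G.Adj i j) (p : EdgeDir G → ℝ) (xj : ℝ),
      JP 0 i j p xj = J0 i j xj + p ⟨(i, j), h⟩ * xj)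
    (hJPrec : ∀ (t : ℕ) (i j : V), G.Adj i j → ∀ (p : EdgeDir G → ℝ) (xj : ℝ),
      IsLeast (Set.range fun y : ℝ =>
          f i y + g i j y xj + ∑ u ∈ (G.neighborFinset i).erase j, JP t u i p y)
        (JP (t + 1) i j p xj))
    -- the perturbed estimates: unique minimizers of the local objectives `b⁽ᵗ⁾_i(·, p)`
    (xEstP : ℕ → V → (EdgeDir G → ℝ) → ℝ)
    (hxEstP : ∀ (t : ℕ) (i : V) (p : EdgeDir G → ℝ) (y : ℝ), y ≠ xEstP t i p →
      f i (xEstP t i p) + ∑ u ∈ G.neighborFinset i, JP t u i p (xEstP t i p) <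
        f i y + ∑ u ∈ G.neighborFinset i, JP t u i p y) :
    ∀ (t : ℕ) (r : V),
      Differentiable ℝ (xEstP t r) ∧
      ∀ (p : EdgeDir G → ℝ) (e : EdgeDir G),
        |deriv (fun s => xEstP t r (Function.update p e s)) (p e)| ≤
          ((1 / M) * (univ.sup' univ_nonempty w / univ.inf' univ_nonempty w)) *
            (lam ^ t / (1 - lam)) := by
  subst hF
  intro t r
  obtain ⟨hdiff, hbound⟩ := minSum_perturbed_sensitivity_general hf_smooth hg_smooth
    (fun i j hij => funext fun b => funext fun a => hg_symm i j hij a b) hM hMle hlam0.le hlam1 hw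
    hdd hJ0smooth (fun i j hij x => (hJ0conv i j hij).imp fun _ hz => hz x) hJP0 hJPrec
    (fun t i p y => (eq_or_ne y (xEstP t i p)).elim (fun h => h ▸ le_rfl) fun h =>
      (hxEstP t i p y h).le) t r
  refine ⟨hdiff, fun p e => (hbound p e).trans ?_⟩
  have hfactor : 0 ≤ lam ^ t / (1 - lam) :=
    div_nonneg (pow_nonneg hlam0.le t) (sub_nonneg.2 hlam1.le)
  exact mul_le_mul_of_nonneg_right (mul_le_mul_of_nonneg_left (div_le_sup_div_inf hw r e.1.2)
    (one_div_nonneg.2 hM.le)) hfactor
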